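/- If a = b is a formula of Λ (a and b terms of the same type) that is not provable in Λ, then in Λ extended with a = b as a new axiom schema, every formula c = d (with c and d terms of the same type) is provable. -/

import Mathlib

set_option autoImplicit false

/-- Simple types over a set `ν` of atomic types. -/
inductive Ty (ν : Type) : Type
  | atom : ν → Ty ν
  | arrow : Ty ν → Ty ν → Ty ν

/-- A typing context: the (types of the) free variables. -/
abbrev Ctx (ν : Type) : Type := List (Ty ν)

/-- Typed de Bruijn variables. -/
inductive Var {ν : Type} : Ctx ν → Ty ν → Type
  | vz {Γ : Ctx ν} {A : Ty ν} : Var (A :: Γ) A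
  | vs {Γ : Ctx ν} {A B : Ty ν} : Var Γ A → Var (B :: Γ) A

/-- Typed terms of the simply typed lambda calculus Λ. -/
inductive Tm {ν : Type} : Ctx ν → Ty ν → Type
  | var {Γ : Ctx ν} {A : Ty ν} : Var Γ A → Tm Γ A
  | app {Γ : Ctx ν} {A B : Ty ν} : Tm Γ (Ty.arrow A B) → Tm Γ A → Tm Γ B
  | lam {Γ : Ctx ν} {A B : Ty ν} : Tm (A :: Γ) B → Tm Γ (Ty.arrow A B)

/-- Renamings between contexts. -/
def Ren {ν : Type} (Γ Δ : Ctx ν) : Type := ∀ A : Ty ν, Var Γ A → Var Δ A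

def Ren.ext {ν : Type} {Γ Δ : Ctx ν} (ρ : Ren Γ Δ) (A : Ty ν) : Ren (A :: Γ) (A :: Δ) :=
  fun _ v => match v with
  | .vz => .vz
  | .vs w => .vs (ρ _ w)

def Tm.rename {ν : Type} : ∀ {Γ Δ : Ctx ν} {A : Ty ν}, Ren Γ Δ → Tm Γ A → Tm Δ A
  | _, _, _, ρ, .var v => .var (ρ _ v)
  | _, _, _, ρ, .app f a => .app (f.rename ρ) (a.rename ρ)
  | _, _, _, ρ, .lam b => .lam (b.rename (ρ.ext _))

/-- Simultaneous substitutions. -/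
def Subst {ν : Type} (Γ Δ : Ctx ν) : Type := ∀ A : Ty ν, Var Γ A → Tm Δ A

def Subst.ext {ν : Type} {Γ Δ : Ctx ν} (σ : Subst Γ Δ) (A : Ty ν) :
    ∀ B : Ty ν, Var (A :: Γ) B → Tm (A :: Δ) B
  | _, .vz => .var .vz
  | _, .vs w => (σ _ w).rename (fun _ => Var.vs)

def Tm.subst {ν : Type} : ∀ {Γ Δ : Ctx ν} {A : Ty ν}, Subst Γ Δ → Tm Γ A → Tm Δ A
  | _, _, _, σ, .var v => σ _ v
  | _, _, _, σ, .app f a => .app (f.subst σ) (a.subst σ)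
  | _, _, _, σ, .lam b => .lam (b.subst (Subst.ext σ _))

/-- Extending a substitution with a term for the last variable. -/
def Subst.cons {ν : Type} {Γ Δ : Ctx ν} {A : Ty ν} (b : Tm Δ A) (σ : Subst Γ Δ) :
    ∀ B : Ty ν, Var (A :: Γ) B → Tm Δ B
  | _, .vz => b
  | _, .vs w => σ _ w

/-- Substitution of a single term for the last variable: `a[b/x]`. -/
def Tm.subst1 {ν : Type} {Γ : Ctx ν} {A B : Ty ν} (a : Tm (A :: Γ) B) (b : Tm Γ A) : Tm Γ B :=
  a.subst (Subst.cons b (fun _ v => .var v))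

/-- The theory Λ of βη-equality. -/
inductive Eqv {ν : Type} : ∀ {Γ : Ctx ν} {A : Ty ν}, Tm Γ A → Tm Γ A → Prop
  | refl {Γ : Ctx ν} {A : Ty ν} (a : Tm Γ A) : Eqv a a
  | symm {Γ : Ctx ν} {A : Ty ν} {a b : Tm Γ A} : Eqv a b → Eqv b a
  | trans {Γ : Ctx ν} {A : Ty ν} {a b c : Tm Γ A} : Eqv a b → Eqv b c → Eqv a c
  | congApp {Γ : Ctx ν} {A B : Ty ν} {f g : Tm Γ (Ty.arrow A B)} {a b : Tm Γ A} :
      Eqv f g → Eqv a b → Eqv (.app f a) (.app g b)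
  | congLam {Γ : Ctx ν} {A B : Ty ν} {a b : Tm (A :: Γ) B} :
      Eqv a b → Eqv (.lam a) (.lam b)
  | beta {Γ : Ctx ν} {A B : Ty ν} (a : Tm (A :: Γ) B) (b : Tm Γ A) :
      Eqv (.app (.lam a) b) (a.subst1 b)
  | eta {Γ : Ctx ν} {A B : Ty ν} (a : Tm Γ (Ty.arrow A B)) :
      Eqv (.lam (.app (a.rename (fun _ => Var.vs)) (.var .vz))) a

/-- Substitution of types for the atomic types, on types. -/
def Ty.substA {ν : Type} (σ : ν → Ty ν) : Ty ν → Ty ν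
  | .atom v => σ v
  | .arrow A B => .arrow (A.substA σ) (B.substA σ)

def Var.substA {ν : Type} (σ : ν → Ty ν) :
    ∀ {Γ : Ctx ν} {A : Ty ν}, Var Γ A → Var (Γ.map (Ty.substA σ)) (A.substA σ)
  | _, _, .vz => .vz
  | _, _, .vs v => .vs (v.substA σ)

/-- Substitution of types for the atomic types, on terms: type-instances. -/
def Tm.substA {ν : Type} (σ : ν → Ty ν) :
    ∀ {Γ : Ctx ν} {A : Ty ν}, Tm Γ A → Tm (Γ.map (Ty.substA σ)) (A.substA σ)
  | _, _, .var v => .var (v.substA σ)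
  | _, _, .app f a => .app (f.substA σ) (a.substA σ)
  | _, _, .lam b => .lam (b.substA σ)

/-- `Ty.arrs [A₁, …, Aₘ] B = Aₘ → (… → (A₁ → B))` : the type of `λx₁…xₘ.a`. -/
def Ty.arrs {ν : Type} : Ctx ν → Ty ν → Ty ν
  | [], B => B
  | A :: Γ, B => Ty.arrs Γ (Ty.arrow A B)

/-- λ-abstracting all the free variables of a term. -/
def Tm.lamAll {ν : Type} : ∀ {Γ : Ctx ν} {A : Ty ν}, Tm Γ A → Tm [] (Ty.arrs Γ A)
  | [], _, a => a
  | _ :: Γ, _, a => Tm.lamAll (Γ := Γ) (Tm.lam a)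

/-- `Ty.arrsR [B₁, …, Bₙ] C = B₁ → (… → (Bₙ → C))`. -/
def Ty.arrsR {ν : Type} : List (Ty ν) → Ty ν → Ty ν
  | [], C => C
  | B :: Bs, C => Ty.arrow B (Ty.arrsR Bs C)

/-- A list of terms `h₁ : B₁, …, hₙ : Bₙ` in context `Δ`. -/
inductive HList {ν : Type} (Δ : Ctx ν) : List (Ty ν) → Type
  | nil : HList Δ []
  | cons {B : Ty ν} {Bs : List (Ty ν)} : Tm Δ B → HList Δ Bs → HList Δ (B :: Bs)

/-- Iterated application `t h₁ … hₙ`. -/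
def HList.apps {ν : Type} {Δ : Ctx ν} :
    ∀ {Bs : List (Ty ν)} {C : Ty ν}, HList Δ Bs → Tm Δ (Ty.arrsR Bs C) → Tm Δ C
  | _, _, .nil, t => t
  | _, _, .cons h hs, t => HList.apps hs (t.app h)

/-- Iterated application `t h₁ … hₙ`. -/
def Tm.apps {ν : Type} {Δ : Ctx ν} {Bs : List (Ty ν)} {C : Ty ν}
    (t : Tm Δ (Ty.arrsR Bs C)) (hs : HList Δ Bs) : Tm Δ C :=
  hs.apps t

/-- Weakening of a closed term into an arbitrary context. -/
def Var.elim0 {ν : Type} {A : Ty ν} {C : Sort*} : Var ([] : Ctx ν) A → C :=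
  fun v => nomatch v

def Tm.wk {ν : Type} {Δ : Ctx ν} {A : Ty ν} (t : Tm ([] : Ctx ν) A) : Tm Δ A :=
  t.rename (fun _ v => v.elim0)

/--
The theory Λ of βη-equality extended with `a₀ = b₀` as a new axiom schema: atomic types
are treated as variables, so every pair of corresponding type-instances of `a₀` and `b₀`
is an axiom (and, the free variables of an axiom being ordinary variables, so is every
substitution instance of such a pair, which is anyhow derivable by (β) and replacement).
-/
inductive EqvExt {ν : Type} {Γ₀ : Ctx ν} {A₀ : Ty ν} (a₀ b₀ : Tm Γ₀ A₀) :
    ∀ {Γ : Ctx ν} {A : Ty ν}, Tm Γ A → Tm Γ A → Prop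
  | refl {Γ : Ctx ν} {A : Ty ν} (a : Tm Γ A) : EqvExt a₀ b₀ a a
  | symm {Γ : Ctx ν} {A : Ty ν} {a b : Tm Γ A} : EqvExt a₀ b₀ a b → EqvExt a₀ b₀ b a
  | trans {Γ : Ctx ν} {A : Ty ν} {a b c : Tm Γ A} :
      EqvExt a₀ b₀ a b → EqvExt a₀ b₀ b c → EqvExt a₀ b₀ a c
  | congApp {Γ : Ctx ν} {A B : Ty ν} {f g : Tm Γ (Ty.arrow A B)} {a b : Tm Γ A} :
      EqvExt a₀ b₀ f g → EqvExt a₀ b₀ a b → EqvExt a₀ b₀ (.app f a) (.app g b)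
  | congLam {Γ : Ctx ν} {A B : Ty ν} {a b : Tm (A :: Γ) B} :
      EqvExt a₀ b₀ a b → EqvExt a₀ b₀ (.lam a) (.lam b)
  | beta {Γ : Ctx ν} {A B : Ty ν} (a : Tm (A :: Γ) B) (b : Tm Γ A) :
      EqvExt a₀ b₀ (.app (.lam a) b) (a.subst1 b)
  | eta {Γ : Ctx ν} {A B : Ty ν} (a : Tm Γ (Ty.arrow A B)) :
      EqvExt a₀ b₀ (.lam (.app (a.rename (fun _ => Var.vs)) (.var .vz))) a
  | ax (σ : ν → Ty ν) {Δ : Ctx ν} (su : Subst (Γ₀.map (Ty.substA σ)) Δ) :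
      EqvExt a₀ b₀ ((a₀.substA σ).subst su) ((b₀.substA σ).subst su)

/-! ### Renaming and substitution lemmas -/

theorem Tm.rename_congr {ν : Type} {Γ Δ : Ctx ν} {A : Ty ν} (t : Tm Γ A) {ρ τ : Ren Γ Δ}
    (h : ∀ B v, ρ B v = τ B v) : t.rename ρ = t.rename τ := by
  have : ρ = τ := funext fun B => funext fun v => h B v
  rw [this]

theorem Tm.subst_congr {ν : Type} {Γ Δ : Ctx ν} {A : Ty ν} (t : Tm Γ A) {s r : Subst Γ Δ}
    (h : ∀ B v, s B v = r B v) : t.subst s = t.subst r := by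
  have : s = r := funext fun B => funext fun v => h B v
  rw [this]

theorem Tm.rename_rename {ν : Type} {Γ : Ctx ν} {A : Ty ν} (t : Tm Γ A) :
    ∀ {Δ Θ : Ctx ν} (ρ : Ren Γ Δ) (τ : Ren Δ Θ),
      (t.rename ρ).rename τ = t.rename (fun B v => τ B (ρ B v)) := by
  induction t with
  | var v => intros; rfl
  | app f a ihf iha => intro Δ Θ ρ τ; exact congrArg₂ Tm.app (ihf ρ τ) (iha ρ τ)
  | lam b ih =>
    intro Δ Θ ρ τ
    exact congrArg Tm.lam ((ih _ _).trans (Tm.rename_congr _ (fun B v => by cases v <;> rfl)))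

theorem Tm.rename_subst {ν : Type} {Γ : Ctx ν} {A : Ty ν} (t : Tm Γ A) :
    ∀ {Δ Θ : Ctx ν} (ρ : Ren Γ Δ) (s : Subst Δ Θ),
      (t.rename ρ).subst s = t.subst (fun B v => s B (ρ B v)) := by
  induction t with
  | var v => intros; rfl
  | app f a ihf iha => intro Δ Θ ρ s; exact congrArg₂ Tm.app (ihf ρ s) (iha ρ s)
  | lam b ih =>
    intro Δ Θ ρ s
    exact congrArg Tm.lam ((ih _ _).trans (Tm.subst_congr _ (fun B v => by cases v <;> rfl)))

theorem Tm.subst_rename {ν : Type} {Γ : Ctx ν} {A : Ty ν} (t : Tm Γ A) :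
    ∀ {Δ Θ : Ctx ν} (s : Subst Γ Δ) (ρ : Ren Δ Θ),
      (t.subst s).rename ρ = t.subst (fun B v => (s B v).rename ρ) := by
  induction t with
  | var v => intros; rfl
  | app f a ihf iha => intro Δ Θ s ρ; exact congrArg₂ Tm.app (ihf s ρ) (iha s ρ)
  | lam b ih =>
    intro Δ Θ s ρ
    refine congrArg Tm.lam ((ih _ _).trans (Tm.subst_congr _ (fun B v => ?_)))
    cases v with
    | vz => rfl
    | vs w =>
      exact (Tm.rename_rename _ _ _).trans
        (Tm.rename_rename (s _ w) ρ (fun _ => Var.vs)).symm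

theorem Tm.subst_subst {ν : Type} {Γ : Ctx ν} {A : Ty ν} (t : Tm Γ A) :
    ∀ {Δ Θ : Ctx ν} (s : Subst Γ Δ) (r : Subst Δ Θ),
      (t.subst s).subst r = t.subst (fun B v => (s B v).subst r) := by
  induction t with
  | var v => intros; rfl
  | app f a ihf iha => intro Δ Θ s r; exact congrArg₂ Tm.app (ihf s r) (iha s r)
  | lam b ih =>
    intro Δ Θ s r
    refine congrArg Tm.lam ((ih _ _).trans (Tm.subst_congr _ (fun B v => ?_)))
    cases v with
    | vz => rfl
    | vs w => exact (Tm.rename_subst _ _ _).trans (Tm.subst_rename _ _ _).symm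

theorem Tm.subst_id {ν : Type} {Γ : Ctx ν} {A : Ty ν} (t : Tm Γ A) :
    t.subst (fun _ v => .var v) = t := by
  induction t with
  | var v => rfl
  | app f a ihf iha => exact congrArg₂ Tm.app ihf iha
  | lam b ih =>
    exact congrArg Tm.lam ((Tm.subst_congr _ (fun B v => by cases v <;> rfl)).trans ih)

theorem Tm.rename_id {ν : Type} {Γ : Ctx ν} {A : Ty ν} (t : Tm Γ A) :
    t.rename (fun _ v => v) = t := by
  induction t with
  | var v => rfl
  | app f a ihf iha => exact congrArg₂ Tm.app ihf iha
  | lam b ih =>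
    exact congrArg Tm.lam ((Tm.rename_congr _ (fun B v => by cases v <;> rfl)).trans ih)

theorem Tm.subst_ext_subst1 {ν : Type} {Γ Δ : Ctx ν} {A B : Ty ν} (t : Tm (A :: Γ) B)
    (s : Subst Γ Δ) (u : Tm Δ A) :
    (t.subst (Subst.ext s A)).subst1 u = t.subst (Subst.cons u s) := by
  refine (Tm.subst_subst _ _ _).trans (Tm.subst_congr _ (fun B v => ?_))
  cases v with
  | vz => rfl
  | vs w => exact (Tm.rename_subst _ _ _).trans (Tm.subst_id _)

theorem Eqv.of_eq {ν : Type} {Γ : Ctx ν} {A : Ty ν} {t u : Tm Γ A} (h : t = u) : Eqv t u := by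
  rw [h]; exact .refl _

theorem EqvExt.of_eq {ν : Type} {Γ₀ : Ctx ν} {A₀ : Ty ν} {a₀ b₀ : Tm Γ₀ A₀}
    {Γ : Ctx ν} {A : Ty ν} {t u : Tm Γ A} (h : t = u) : EqvExt a₀ b₀ t u := by
  rw [h]; exact .refl _

theorem Eqv.rename {ν : Type} {Γ : Ctx ν} {A : Ty ν} {t u : Tm Γ A} (h : Eqv t u) :
    ∀ {Δ : Ctx ν} (ρ : Ren Γ Δ), Eqv (t.rename ρ) (u.rename ρ) := by
  induction h with
  | refl a => intros; exact .refl _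
  | symm _ ih => intro Δ ρ; exact .symm (ih ρ)
  | trans _ _ ih1 ih2 => intro Δ ρ; exact .trans (ih1 ρ) (ih2 ρ)
  | congApp _ _ ih1 ih2 => intro Δ ρ; exact .congApp (ih1 ρ) (ih2 ρ)
  | congLam _ ih => intro Δ ρ; exact .congLam (ih _)
  | beta a b =>
    intro Δ ρ
    have : (a.rename (ρ.ext _)).subst1 (b.rename ρ) = (a.subst1 b).rename ρ :=
      ((Tm.rename_subst _ _ _).trans
        (Tm.subst_congr _ (fun B v => by cases v <;> rfl))).trans (Tm.subst_rename _ _ _).symm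
    exact .trans (.beta _ _) (.of_eq this)
  | @eta Γ' A' B' a =>
    intro Δ ρ
    have : (a.rename (fun _ => Var.vs)).rename (ρ.ext A')
        = (a.rename ρ).rename (fun _ => Var.vs) :=
      (Tm.rename_rename _ _ _).trans (Tm.rename_rename a ρ (fun _ => Var.vs)).symm
    exact .trans (.of_eq (congrArg (fun t => Tm.lam (Tm.app t (.var .vz))) this)) (.eta _)

/-! ### Trees and the full type structure over families of trees -/

inductive LTree (ν : Type) : Type
  | bot : LTree ν
  | var : ℕ → LTree ν
  | app : Ty ν → LTree ν → LTree ν → LTree ν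
  | lam : LTree ν → LTree ν

abbrev Dom (ν : Type) : Type := ℕ → LTree ν

/-- de Bruijn level of a variable. -/
def Var.level {ν : Type} : ∀ {Γ : Ctx ν} {A : Ty ν}, Var Γ A → ℕ
  | _ :: Γ, _, .vz => Γ.length
  | _, _, .vs w => w.level

theorem Var.level_lt {ν : Type} {Γ : Ctx ν} {A : Ty ν} (v : Var Γ A) : v.level < Γ.length := by
  induction v with
  | vz => simp [Var.level]
  | vs w ih => simp only [Var.level, List.length_cons]; omega

theorem Var.level_inj {ν : Type} {Γ : Ctx ν} {A : Ty ν} (v w : Var Γ A)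
    (h : v.level = w.level) : v = w := by
  induction v with
  | vz =>
    cases w with
    | vz => rfl
    | vs w => have := w.level_lt; simp only [Var.level] at h; omega
  | vs v ih =>
    cases w with
    | vz => have := v.level_lt; simp only [Var.level] at h; omega
    | vs w => rw [ih w h]

def Tm.code {ν : Type} : ∀ {Γ : Ctx ν} {A : Ty ν}, Tm Γ A → LTree ν
  | _, _, .var v => .var v.level
  | _, _, @Tm.app _ _ A _ f a => .app A f.code a.code
  | _, _, .lam b => .lam b.code

theorem Tm.code_inj {ν : Type} {Γ : Ctx ν} {A : Ty ν} (t : Tm Γ A) :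
    ∀ u : Tm Γ A, t.code = u.code → t = u := by
  induction t with
  | var v =>
    intro u h
    cases u with
    | var w => simp only [Tm.code, LTree.var.injEq] at h; rw [Var.level_inj _ _ h]
    | app => simp [Tm.code] at h
    | lam => simp [Tm.code] at h
  | app f a ihf iha =>
    intro u h
    cases u with
    | var w => simp [Tm.code] at h
    | app g b =>
      simp only [Tm.code, LTree.app.injEq] at h
      obtain ⟨rfl, h1, h2⟩ := h
      rw [ihf _ h1, iha _ h2]
    | lam => simp [Tm.code] at h
  | lam b ih =>
    intro u h
    cases u with
    | var w => simp [Tm.code] at h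
    | app => simp [Tm.code] at h
    | lam c => simp only [Tm.code, LTree.lam.injEq] at h; rw [ih _ h]

def Sem {ν : Type} : Ty ν → Type
  | .atom _ => Dom ν
  | .arrow A B => Sem A → Sem B

def Env {ν : Type} (Γ : Ctx ν) : Type := ∀ A : Ty ν, Var Γ A → Sem A

def Env.cons {ν : Type} {Γ : Ctx ν} {A : Ty ν} (x : Sem A) (η : Env Γ) :
    ∀ B : Ty ν, Var (A :: Γ) B → Sem B
  | _, .vz => x
  | _, .vs w => η _ w

def Tm.eval {ν : Type} : ∀ {Γ : Ctx ν} {A : Ty ν}, Tm Γ A → Env Γ → Sem A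
  | _, _, .var v, η => η _ v
  | _, _, .app f a, η => (f.eval η : Sem _ → Sem _) (a.eval η)
  | _, _, .lam b, η => fun x => b.eval (Env.cons x η)

def dApp {ν : Type} (A : Ty ν) (x y : Dom ν) : Dom ν := fun n => .app A (x n) (y n)
def dVar {ν : Type} (k : ℕ) : Dom ν := fun _ => .var k

/-- reflection and reification -/
def rr {ν : Type} : (A : Ty ν) → (Dom ν → Sem A) × (Sem A → Dom ν)
  | .atom _ => (fun x => x, fun x => x)
  | .arrow A B =>
    (fun x => fun g => (rr B).1 (dApp A x ((rr A).2 g)),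
     fun g => fun n => .lam ((rr B).2 (g ((rr A).1 (dVar n))) (n + 1)))

/-! ### Step 1: completeness of the infinite model -/

def LP {ν : Type} {Γ Δ : Ctx ν} (ρ : Ren Γ Δ) : Prop :=
  ∀ (A : Ty ν) (v : Var Γ A), (ρ A v).level = v.level

def RepT {ν : Type} {Γ : Ctx ν} {A : Ty ν} (t : Tm Γ A) (x : Dom ν) : Prop :=
  ∀ (Δ : Ctx ν) (ρ : Ren Γ Δ), LP ρ → ∃ u : Tm Δ A, Eqv (t.rename ρ) u ∧ u.code = x Δ.length

def LR {ν : Type} : (A : Ty ν) → (Γ : Ctx ν) → Tm Γ A → Sem A → Prop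
  | .atom _, _, t, x => RepT t x
  | .arrow A B, Γ, t, g => ∀ (Δ : Ctx ν) (ρ : Ren Γ Δ), LP ρ → ∀ (u : Tm Δ A) (h : Sem A),
      LR A Δ u h → LR B Δ (.app (t.rename ρ) u) (g h)

theorem RepT.mono {ν : Type} {Γ Δ : Ctx ν} {A : Ty ν} {t : Tm Γ A} {x : Dom ν} (h : RepT t x)
    (ρ : Ren Γ Δ) (hρ : LP ρ) : RepT (t.rename ρ) x := by
  intro Θ τ hτ
  rw [Tm.rename_rename]
  exact h Θ _ (fun B v => by rw [hτ, hρ])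

theorem LR.mono {ν : Type} {Γ Δ : Ctx ν} {A : Ty ν} {t : Tm Γ A} {x : Sem A} (h : LR A Γ t x)
    (ρ : Ren Γ Δ) (hρ : LP ρ) : LR A Δ (t.rename ρ) x := by
  cases A with
  | atom p => exact RepT.mono h ρ hρ
  | arrow A B =>
    intro Θ τ hτ u y hu
    rw [Tm.rename_rename]
    exact h Θ _ (fun B v => by rw [hτ, hρ]) u y hu

theorem LR.resp {ν : Type} {A : Ty ν} : ∀ {Γ : Ctx ν} {t t' : Tm Γ A} {x : Sem A},
    Eqv t t' → LR A Γ t x → LR A Γ t' x := by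
  induction A with
  | atom p =>
    intro Γ t t' x e h Δ ρ hρ
    obtain ⟨u, h1, h2⟩ := h Δ ρ hρ
    exact ⟨u, .trans (.symm (e.rename ρ)) h1, h2⟩
  | arrow A B _ ihB =>
    intro Γ t t' x e h Δ ρ hρ u y hu
    exact ihB (.congApp (e.rename ρ) (.refl u)) (h Δ ρ hρ u y hu)

theorem LR.rr {ν : Type} (A : Ty ν) :
    (∀ (Γ : Ctx ν) (t : Tm Γ A) (x : Dom ν), RepT t x → LR A Γ t ((rr A).1 x)) ∧
    (∀ (Γ : Ctx ν) (t : Tm Γ A) (g : Sem A), LR A Γ t g → RepT t ((_root_.rr A).2 g)) := by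
  induction A with
  | atom p => exact ⟨fun _ _ _ h => h, fun _ _ _ h => h⟩
  | arrow A B ihA ihB =>
    constructor
    · intro Γ t x hx Δ ρ hρ u h hu
      refine ihB.1 Δ _ _ ?_
      intro Θ τ hτ
      obtain ⟨t', h1, h2⟩ := (hx.mono ρ hρ) Θ τ hτ
      obtain ⟨u', h3, h4⟩ := (ihA.2 Δ u h hu) Θ τ hτ
      exact ⟨.app t' u', .congApp h1 h3, by simp only [Tm.code, h2, h4, dApp]⟩
    · intro Γ t g hg Δ ρ hρ
      have h1 := LR.mono hg ρ hρ
      have h2 : LR A (A :: Δ) (.var .vz) ((_root_.rr A).1 (dVar Δ.length)) := by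
        refine ihA.1 _ _ _ ?_
        intro Θ τ hτ
        exact ⟨.var (τ _ .vz), .refl _, congrArg LTree.var (hτ _ _)⟩
      have h3 := h1 (A :: Δ) (fun _ => Var.vs) (fun _ _ => rfl) _ _ h2
      obtain ⟨b, h4, h5⟩ := ihB.2 _ _ _ h3 (A :: Δ) (fun _ v => v) (fun _ _ => rfl)
      rw [Tm.rename_id] at h4
      refine ⟨.lam b, .trans (.symm (.eta _)) (.congLam h4), ?_⟩
      simp only [Tm.code, h5, _root_.rr, List.length_cons]

theorem LR.fund {ν : Type} {Γ : Ctx ν} {A : Ty ν} (t : Tm Γ A) :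
    ∀ {Δ : Ctx ν} (s : Subst Γ Δ) (η : Env Γ),
      (∀ (B : Ty ν) (v : Var Γ B), LR B Δ (s B v) (η B v)) → LR A Δ (t.subst s) (t.eval η) := by
  induction t with
  | var v => intro Δ s η h; exact h _ v
  | app f a ihf iha =>
    intro Δ s η h
    have h1 := ihf s η h Δ (fun _ v => v) (fun _ _ => rfl) _ _ (iha s η h)
    rw [Tm.rename_id] at h1
    exact h1
  | lam b ih =>
    intro Δ s η h Θ ρ hρ u x hu
    have e : Eqv (.app (((Tm.lam b).subst s).rename ρ) u)
        (b.subst (Subst.cons u (fun B v => (s B v).rename ρ))) := by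
      refine .trans (.congApp (.of_eq (Tm.subst_rename _ _ _)) (.refl u)) ?_
      exact .trans (.beta _ _) (.of_eq (Tm.subst_ext_subst1 _ _ _))
    refine LR.resp (.symm e) (ih _ (Env.cons x η) ?_)
    intro B v
    cases v with
    | vz => exact hu
    | vs w => exact (h _ w).mono ρ hρ

def env0 {ν : Type} (Γ : Ctx ν) : Env Γ := fun A v => (rr A).1 (dVar v.level)

theorem completeness {ν : Type} {Γ : Ctx ν} {A : Ty ν} (a b : Tm Γ A)
    (h : (rr A).2 (a.eval (env0 Γ)) Γ.length = (rr A).2 (b.eval (env0 Γ)) Γ.length) :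
    Eqv a b := by
  have key : ∀ t : Tm Γ A, ∃ u : Tm Γ A, Eqv t u ∧
      u.code = (rr A).2 (t.eval (env0 Γ)) Γ.length := by
    intro t
    have h1 := LR.fund t (fun _ v => .var v) (env0 Γ) (fun B v => (LR.rr B).1 _ _ _ (by
      intro Θ τ hτ
      exact ⟨.var (τ _ v), .refl _, congrArg LTree.var (hτ _ _)⟩))
    rw [Tm.subst_id] at h1
    have h2 := (LR.rr A).2 _ _ _ h1 Γ (fun _ v => v) (fun _ _ => rfl)
    rwa [Tm.rename_id] at h2
  obtain ⟨a', ha, ha'⟩ := key a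
  obtain ⟨b', hb, hb'⟩ := key b
  have : a' = b' := Tm.code_inj _ _ (by rw [ha', hb', h])
  subst this
  exact .trans ha (.symm hb)

/-! ### Finite congruences on the domain -/

def LTree.sub {ν : Type} : LTree ν → ℕ → Set (ℕ × LTree ν)
  | .bot, n => {(n, .bot)}
  | .var k, n => {(n, .var k)}
  | .app A s t, n => {(n, .app A s t)} ∪ (s.sub n ∪ t.sub n)
  | .lam t, n => {(n, .lam t)} ∪ t.sub (n + 1)

def SubClosed {ν : Type} (P : Set (ℕ × LTree ν)) : Prop :=
  (∀ n A s t, (n, LTree.app A s t) ∈ P → (n, s) ∈ P ∧ (n, t) ∈ P) ∧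
  (∀ n t, (n, LTree.lam t) ∈ P → (n + 1, t) ∈ P)

theorem LTree.sub_self {ν : Type} (t : LTree ν) (n : ℕ) : (n, t) ∈ t.sub n := by
  cases t <;> simp [LTree.sub]

theorem LTree.sub_finite {ν : Type} (t : LTree ν) : ∀ n, (t.sub n).Finite := by
  induction t with
  | bot => intro n; exact Set.finite_singleton _
  | var k => intro n; exact Set.finite_singleton _
  | app A s t ihs iht => intro n; exact (Set.finite_singleton _).union ((ihs n).union (iht n))
  | lam t ih => intro n; exact (Set.finite_singleton _).union (ih _)

theorem SubClosed.union {ν : Type} {P Q : Set (ℕ × LTree ν)} (hP : SubClosed P)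
    (hQ : SubClosed Q) : SubClosed (P ∪ Q) := by
  constructor
  · rintro n A s t (h | h)
    · exact ⟨.inl (hP.1 _ _ _ _ h).1, .inl (hP.1 _ _ _ _ h).2⟩
    · exact ⟨.inr (hQ.1 _ _ _ _ h).1, .inr (hQ.1 _ _ _ _ h).2⟩
  · rintro n t (h | h)
    · exact .inl (hP.2 _ _ h)
    · exact .inr (hQ.2 _ _ h)

theorem LTree.sub_closed {ν : Type} (t : LTree ν) : ∀ n, SubClosed (t.sub n) := by
  induction t with
  | bot => intro n; constructor <;> simp [LTree.sub]
  | var k => intro n; constructor <;> simp [LTree.sub]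
  | app A s t ihs iht =>
    intro n
    have h := (ihs n).union (iht n)
    constructor
    · rintro m B u v (h1 | h1)
      · simp only [Set.mem_singleton_iff, Prod.mk.injEq, LTree.app.injEq] at h1
        obtain ⟨rfl, rfl, rfl, rfl⟩ := h1
        exact ⟨.inr (.inl (LTree.sub_self _ _)), .inr (.inr (LTree.sub_self _ _))⟩
      · exact ⟨.inr (h.1 _ _ _ _ h1).1, .inr (h.1 _ _ _ _ h1).2⟩
    · rintro m u (h1 | h1)
      · simp at h1
      · exact .inr (h.2 _ _ h1)
  | lam t ih =>
    intro n
    have h := ih (n + 1)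
    constructor
    · rintro m B u v (h1 | h1)
      · simp at h1
      · exact ⟨.inr (h.1 _ _ _ _ h1).1, .inr (h.1 _ _ _ _ h1).2⟩
    · rintro m u (h1 | h1)
      · simp only [Set.mem_singleton_iff, Prod.mk.injEq, LTree.lam.injEq] at h1
        obtain ⟨rfl, rfl⟩ := h1
        exact .inr (LTree.sub_self _ _)
      · exact .inr (h.2 _ _ h1)

def dLam {ν : Type} (k : ℕ) (acc x : Dom ν) : Dom ν :=
  fun n => if n = k then .lam (x (n + 1)) else acc n

def Compat {ν X : Type} (e : Dom ν → X) (F : Dom ν → Dom ν → Dom ν) : Prop :=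
  ∀ x x' y y', e x = e x' → e y = e y' → e (F x y) = e (F x' y')

theorem finite_congruence {ν : Type} (x y : Dom ν) (m : ℕ) (h : x m ≠ y m) :
    ∃ (n : ℕ) (e : Dom ν → Fin n) (N : ℕ), e x ≠ e y ∧ (∀ A, Compat e (dApp A)) ∧
      (∀ k, Compat e (dLam k)) ∧ (∀ z z' : Dom ν, (∀ i < N, z i = z' i) → e z = e z') := by
  classical
  let P : Set (ℕ × LTree ν) := (x m).sub m ∪ (y m).sub m
  have hP : SubClosed P := (LTree.sub_closed _ _).union (LTree.sub_closed _ _)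
  have hfin : P.Finite := (LTree.sub_finite _ _).union (LTree.sub_finite _ _)
  have hx : (m, x m) ∈ P := .inl (LTree.sub_self _ _)
  have : Finite P := hfin
  obtain ⟨n, ⟨φ⟩⟩ := Finite.exists_equiv_fin (Set P)
  let e0 : Dom ν → Set P := fun z => {p | z p.1.1 = p.1.2}
  have he0 : ∀ z z', e0 z = e0 z' → ∀ p ∈ P, z p.1 = p.2 ↔ z' p.1 = p.2 := by
    intro z z' hz p hp
    have := Set.ext_iff.1 hz ⟨p, hp⟩
    exact this
  obtain ⟨N, hN⟩ : ∃ N, ∀ p ∈ P, p.1 < N := by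
    obtain ⟨N, hN⟩ := (hfin.image Prod.fst).bddAbove
    exact ⟨N + 1, fun p hp => Nat.lt_succ_of_le (hN ⟨p, hp, rfl⟩)⟩
  refine ⟨n, fun z => φ (e0 z), N, ?_, ?_, ?_, ?_⟩
  · intro hxy
    exact h (((he0 _ _ (φ.injective hxy)) _ hx).1 rfl).symm
  · intro A z z' w w' h1 h2
    have h1 := he0 _ _ (φ.injective h1)
    have h2 := he0 _ _ (φ.injective h2)
    refine congrArg φ (Set.ext ?_)
    rintro ⟨⟨i, t⟩, hp⟩
    change dApp A z w i = t ↔ dApp A z' w' i = t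
    cases t with
    | app B s t =>
      have := hP.1 _ _ _ _ hp
      have h3 := h1 _ this.1
      have h4 := h2 _ this.2
      simp only [dApp, LTree.app.injEq] at *
      rw [h3, h4]
    | _ => simp [dApp]
  · intro k z z' w w' h1 h2
    have h1 := he0 _ _ (φ.injective h1)
    have h2 := he0 _ _ (φ.injective h2)
    refine congrArg φ (Set.ext ?_)
    rintro ⟨⟨i, t⟩, hp⟩
    change dLam k z w i = t ↔ dLam k z' w' i = t
    unfold dLam
    split_ifs with hi
    · cases t with
      | lam s =>
        have h4 := h2 _ (hP.2 _ _ hp)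
        simp only [LTree.lam.injEq] at *
        exact h4
      | _ => simp
    · exact h1 _ hp
  · intro z z' hz
    refine congrArg φ (Set.ext ?_)
    rintro ⟨⟨i, t⟩, hp⟩
    change z i = t ↔ z' i = t
    rw [hz i (hN _ hp)]

/-! ### n-ary abstraction and application -/

def Ob {ν : Type} (C : Ty ν) : ℕ → Ty ν
  | 0 => C
  | n + 1 => .arrow C (Ob C n)

def appsN {ν : Type} {C : Ty ν} {Δ : Ctx ν} :
    (n : ℕ) → Tm Δ (Ob C n) → (Fin n → Tm Δ C) → Tm Δ C
  | 0, t, _ => t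
  | n + 1, t, z => appsN n (Tm.app t (z 0)) (fun i => z i.succ)

def extN {ν : Type} (C : Ty ν) : ℕ → Ctx ν → Ctx ν
  | 0, Γ => Γ
  | n + 1, Γ => extN C n (C :: Γ)

def lamN {ν : Type} {C : Ty ν} : (n : ℕ) → {Γ : Ctx ν} → Tm (extN C n Γ) C → Tm Γ (Ob C n)
  | 0, _, t => t
  | n + 1, Γ, t => Tm.lam (lamN n (Γ := C :: Γ) t)

def wkN {ν : Type} {C : Ty ν} : (n : ℕ) → {Γ : Ctx ν} → {A : Ty ν} → Var Γ A →
    Var (extN C n Γ) A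
  | 0, _, _, v => v
  | n + 1, _, _, v => wkN n (Var.vs v)

def varN {ν : Type} {C : Ty ν} : (n : ℕ) → {Γ : Ctx ν} → Fin n → Var (extN C n Γ) C
  | 0, _, i => i.elim0
  | n + 1, Γ, i => Fin.cases (wkN n (Γ := C :: Γ) Var.vz) (fun j => varN n (Γ := C :: Γ) j) i

def consN {ν : Type} {C : Ty ν} {Δ : Ctx ν} : (n : ℕ) → {Γ : Ctx ν} → (Fin n → Tm Δ C) →
    Subst Γ Δ → Subst (extN C n Γ) Δ
  | 0, _, _, s => s
  | n + 1, _, z, s => consN n (fun i => z i.succ) (Subst.cons (z 0) s)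

theorem consN_wkN {ν : Type} {C : Ty ν} {Δ : Ctx ν} (n : ℕ) :
    ∀ {Γ : Ctx ν} (z : Fin n → Tm Δ C) (s : Subst Γ Δ) {A : Ty ν} (v : Var Γ A),
      consN n z s A (wkN n v) = s A v := by
  induction n with
  | zero => intros; rfl
  | succ n ih =>
    intro Γ z s A v
    exact ih (Γ := C :: Γ) _ (Subst.cons (z 0) s) (Var.vs v)

theorem consN_varN {ν : Type} {C : Ty ν} {Δ : Ctx ν} (n : ℕ) :
    ∀ {Γ : Ctx ν} (z : Fin n → Tm Δ C) (s : Subst Γ Δ) (i : Fin n),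
      consN n z s C (varN n i) = z i := by
  induction n with
  | zero => intro Γ z s i; exact i.elim0
  | succ n ih =>
    intro Γ z s i
    refine Fin.cases ?_ (fun j => ?_) i
    · exact consN_wkN n (Γ := C :: Γ) _ (Subst.cons (z 0) s) Var.vz
    · exact ih (Γ := C :: Γ) _ (Subst.cons (z 0) s) j

theorem subst_appsN {ν : Type} {C : Ty ν} {Γ Δ : Ctx ν} (s : Subst Γ Δ) (n : ℕ) :
    ∀ (t : Tm Γ (Ob C n)) (z : Fin n → Tm Γ C),
      (appsN n t z).subst s = appsN n (t.subst s) (fun i => (z i).subst s) := by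
  induction n with
  | zero => intros; rfl
  | succ n ih => intro t z; simp only [appsN, ih]; rfl

section Step2

variable {ν : Type} {Γ₀ : Ctx ν} {A₀ : Ty ν} (a₀ b₀ : Tm Γ₀ A₀)

theorem appsN_congr {C : Ty ν} {Δ : Ctx ν} (n : ℕ) :
    ∀ {t t' : Tm Δ (Ob C n)} {z z' : Fin n → Tm Δ C}, EqvExt a₀ b₀ t t' →
      (∀ i, EqvExt a₀ b₀ (z i) (z' i)) → EqvExt a₀ b₀ (appsN n t z) (appsN n t' z') := by
  induction n with
  | zero => intro t t' z z' h _; exact h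
  | succ n ih => intro t t' z z' h hz; exact ih (.congApp h (hz 0)) (fun i => hz _)

theorem appsN_lamN {C : Ty ν} {Δ : Ctx ν} (n : ℕ) :
    ∀ {Γ : Ctx ν} (b : Tm (extN C n Γ) C) (s : Subst Γ Δ) (z : Fin n → Tm Δ C),
      EqvExt a₀ b₀ (appsN n ((lamN n b).subst s) z) (b.subst (consN n z s)) := by
  induction n with
  | zero => intros; exact .refl _
  | succ n ih =>
    intro Γ b s z
    refine .trans (appsN_congr a₀ b₀ n ?_ (fun i => .refl _)) (ih (Γ := C :: Γ) b _ _)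
    exact .trans (.beta _ _) (.of_eq (Tm.subst_ext_subst1 _ _ _))

theorem beta1 {Δ : Ctx ν} {A B : Ty ν} (b : Tm (A :: Δ) B) (t : Tm Δ A) :
    EqvExt a₀ b₀ (.app (.lam b) t) (b.subst (Subst.cons t (fun _ v => .var v))) := .beta _ _

theorem beta2 {Δ : Ctx ν} {A A' B : Ty ν} (b : Tm (A' :: A :: Δ) B) (t : Tm Δ A) (u : Tm Δ A') :
    EqvExt a₀ b₀ (.app (.app (.lam (.lam b)) t) u)
      (b.subst (Subst.cons u (Subst.cons t (fun _ v => .var v)))) := by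
  refine .trans (.congApp (.beta _ _) (.refl u)) ?_
  exact .trans (.beta _ _) (.of_eq (Tm.subst_ext_subst1 _ _ _))

theorem wk1_subst {Δ : Ctx ν} {A B : Ty ν} (t : Tm Δ B) (u : Tm Δ A) :
    (t.rename (fun _ => Var.vs)).subst (Subst.cons u (fun _ v => .var v)) = t := by
  exact (Tm.rename_subst _ _ _).trans (Tm.subst_id t)

theorem wk2_subst {Δ : Ctx ν} {A A' B : Ty ν} (t : Tm Δ B) (u : Tm Δ A) (u' : Tm Δ A') :
    (t.rename (fun _ v => Var.vs (Var.vs v))).subst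
      (Subst.cons u' (Subst.cons u (fun _ v => .var v))) = t := by
  exact (Tm.rename_subst _ _ _).trans (Tm.subst_id t)

variable {C : Ty ν} {Δ : Ctx ν} {n : ℕ} (e : Dom ν → Fin n)

/-- The logical relation between the infinite model and the instances of terms. -/
def RR : (A : Ty ν) → Sem A → Tm Δ (A.substA (fun _ => Ob C n)) → Prop
  | .atom _, x, t => ∀ z : Fin n → Tm Δ C, EqvExt a₀ b₀ (appsN n t z) (z (e x))
  | .arrow A B, g, t => ∀ (x : Sem A) (u : Tm Δ (A.substA (fun _ => Ob C n))),
      RR A x u → RR B (g x) (Tm.app t u)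

def RO (x : Dom ν) (t : Tm Δ (Ob C n)) : Prop :=
  ∀ z : Fin n → Tm Δ C, EqvExt a₀ b₀ (appsN n t z) (z (e x))

variable {a₀ b₀ e}

theorem RO.resp {x : Dom ν} {t t' : Tm Δ (Ob C n)} (h : EqvExt a₀ b₀ t' t)
    (hx : RO a₀ b₀ e x t) : RO a₀ b₀ e x t' :=
  fun z => .trans (appsN_congr a₀ b₀ n h (fun _ => .refl _)) (hx z)

theorem RR.resp {A : Ty ν} : ∀ {x : Sem A} {t t' : Tm Δ (A.substA (fun _ => Ob C n))},
    EqvExt a₀ b₀ t' t → RR a₀ b₀ e A x t → RR a₀ b₀ e A x t' := by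
  induction A with
  | atom p => intro x t t' h hx; exact RO.resp h hx
  | arrow A B _ ihB =>
    intro x t t' h hx y u hu
    exact ihB (.congApp h (.refl u)) (hx y u hu)

theorem RR.fund {Γ : Ctx ν} {A : Ty ν} (t : Tm Γ A) :
    ∀ (s : Subst (Γ.map (Ty.substA (fun _ => Ob C n))) Δ) (η : Env Γ),
      (∀ (B : Ty ν) (v : Var Γ B), RR a₀ b₀ e B (η B v) (s _ (v.substA _))) →
        RR a₀ b₀ e A (t.eval η) ((t.substA (fun _ => Ob C n)).subst s) := by
  induction t with
  | var v => intro s η h; exact h _ v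
  | app f a ihf iha =>
    intro s η h
    exact ihf s η h _ _ (iha s η h)
  | lam b ih =>
    intro s η h x u hu
    refine RR.resp (t := (b.substA (fun _ => Ob C n)).subst (Subst.cons u s)) ?_
      (ih (Subst.cons u s) (Env.cons x η) ?_)
    · exact .trans (.beta _ _) (.of_eq (Tm.subst_ext_subst1 _ _ _))
    · intro B v
      cases v with
      | vz => exact hu
      | vs w => exact h _ w

theorem RO.const (x : Dom ν) : ∃ t : Tm Δ (Ob C n), RO a₀ b₀ e x t := by
  refine ⟨lamN n (.var (varN n (e x))), fun z => ?_⟩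
  have h := appsN_lamN a₀ b₀ n (Tm.var (varN (C := C) n (Γ := Δ) (e x))) (fun _ v => .var v) z
  rw [Tm.subst_id] at h
  exact .trans h (.of_eq (consN_varN n z _ (e x)))

theorem RO.binop (F : Dom ν → Dom ν → Dom ν) (hF : Compat e F) :
    ∃ f : Tm Δ (.arrow (Ob C n) (.arrow (Ob C n) (Ob C n))), ∀ x y t u,
      RO a₀ b₀ e x t → RO a₀ b₀ e y u → RO a₀ b₀ e (F x y) (.app (.app f t) u) := by
  classical
  obtain ⟨G, hG⟩ : ∃ G : Fin n → Fin n → Fin n, ∀ x y, e (F x y) = G (e x) (e y) := by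
    refine ⟨fun i j => if h : ∃ p : Dom ν × Dom ν, e p.1 = i ∧ e p.2 = j then
      e (F h.choose.1 h.choose.2) else i, fun x y => ?_⟩
    have h : ∃ p : Dom ν × Dom ν, e p.1 = e x ∧ e p.2 = e y := ⟨(x, y), rfl, rfl⟩
    beta_reduce
    rw [dif_pos h]
    exact hF _ _ _ _ h.choose_spec.1.symm h.choose_spec.2.symm
  let body : Tm (extN C n (Ob C n :: Ob C n :: Δ)) C :=
    appsN n (.var (wkN n (.vs .vz))) (fun i =>
      appsN n (.var (wkN n .vz)) (fun j => .var (varN n (G i j))))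
  refine ⟨.lam (.lam (lamN n body)), fun x y t u hx hy z => ?_⟩
  refine .trans (appsN_congr a₀ b₀ n (beta2 a₀ b₀ _ _ _) (fun _ => .refl _)) ?_
  refine .trans (appsN_lamN a₀ b₀ n _ _ _) ?_
  refine .trans (.of_eq (subst_appsN _ n _ _)) ?_
  have h1 : ∀ i : Fin n, EqvExt a₀ b₀
      ((appsN n (Tm.var (wkN (C := C) n (Γ := Ob C n :: Ob C n :: Δ) .vz))
        (fun j => .var (varN n (G i j)))).subst
          (consN n z (Subst.cons u (Subst.cons t (fun _ v => .var v))))) (z (G i (e y))) := by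
    intro i
    refine .trans (.of_eq (subst_appsN _ n _ _)) ?_
    exact .trans (appsN_congr a₀ b₀ n (.of_eq (consN_wkN n z _ _))
      (fun j => .of_eq (consN_varN n z _ (G i j)))) (hy (fun j => z (G i j)))
  refine .trans (appsN_congr a₀ b₀ n (.of_eq (consN_wkN n z _ _)) h1) ?_
  rw [hG]
  exact hx (fun i => z (G i (e y)))

theorem RR.rr {N : ℕ} (hA : ∀ A, Compat e (dApp A)) (hL : ∀ k, Compat e (dLam k))
    (hN : ∀ z z' : Dom ν, (∀ i < N, z i = z' i) → e z = e z') (A : Ty ν) :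
    (∃ q : Tm Δ (.arrow (Ob C n) (A.substA (fun _ => Ob C n))), ∀ x t,
      RO a₀ b₀ e x t → RR a₀ b₀ e A ((rr A).1 x) (.app q t)) ∧
    (∃ r : Tm Δ (.arrow (A.substA (fun _ => Ob C n)) (Ob C n)), ∀ g t,
      RR a₀ b₀ e A g t → RO a₀ b₀ e ((_root_.rr A).2 g) (.app r t)) := by
  induction A with
  | atom p =>
    have h : ∀ (x : Dom ν) (t : Tm Δ (Ob C n)), RO a₀ b₀ e x t →
        RO a₀ b₀ e x (.app (.lam (.var .vz)) t) := fun x t hx => RO.resp (.beta _ _) hx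
    exact ⟨⟨.lam (.var .vz), h⟩, ⟨.lam (.var .vz), h⟩⟩
  | arrow A B ihA ihB =>
    obtain ⟨⟨qA, hqA⟩, ⟨rA, hrA⟩⟩ := ihA
    obtain ⟨⟨qB, hqB⟩, ⟨rB, hrB⟩⟩ := ihB
    constructor
    · obtain ⟨f, hf⟩ := RO.binop (a₀ := a₀) (b₀ := b₀) (C := C) (Δ := Δ) (dApp A) (hA A)
      refine ⟨.lam (.lam (.app (qB.rename (fun _ v => Var.vs (Var.vs v)))
        (.app (.app (f.rename (fun _ v => Var.vs (Var.vs v))) (.var (.vs .vz)))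
          (.app (rA.rename (fun _ v => Var.vs (Var.vs v))) (.var .vz))))), ?_⟩
      intro x t hx g u hu
      refine RR.resp (beta2 a₀ b₀ _ _ _) ?_
      simp only [Tm.subst, wk2_subst]
      exact hqB _ _ (hf _ _ _ _ hx (hrA _ _ hu))
    · have key : ∀ k : ℕ, ∃ r : Tm Δ (.arrow ((Ty.arrow A B).substA (fun _ => Ob C n)) (Ob C n)),
          ∀ g t, RR a₀ b₀ e (.arrow A B) g t → RO a₀ b₀ e
            (fun i => if i < k then (_root_.rr (.arrow A B)).2 g i else .bot) (.app r t) := by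
        intro k
        induction k with
        | zero =>
          obtain ⟨c, hc⟩ := RO.const (a₀ := a₀) (b₀ := b₀) (C := C) (Δ := Δ) (e := e)
            (fun _ => .bot)
          refine ⟨.lam (c.rename (fun _ => Var.vs)), fun g t _ => ?_⟩
          refine RO.resp (beta1 a₀ b₀ _ _) ?_
          rw [wk1_subst]
          simpa using hc
        | succ k ih =>
          obtain ⟨r, hr⟩ := ih
          obtain ⟨f, hf⟩ := RO.binop (a₀ := a₀) (b₀ := b₀) (C := C) (Δ := Δ) (dLam k) (hL k)
          obtain ⟨c, hc⟩ := RO.const (a₀ := a₀) (b₀ := b₀) (C := C) (Δ := Δ) (e := e) (dVar k)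
          refine ⟨.lam (.app (.app (f.rename (fun _ => Var.vs))
            (.app (r.rename (fun _ => Var.vs)) (.var .vz)))
            (.app (rB.rename (fun _ => Var.vs))
              (.app (.var .vz) ((Tm.app qA c).rename (fun _ => Var.vs))))), fun g t hg => ?_⟩
          refine RO.resp (beta1 a₀ b₀ _ _) ?_
          simp only [Tm.subst, wk1_subst]
          have h := hf _ _ _ _ (hr g t hg) (hrB _ _ (hg _ _ (hqA _ _ hc)))
          suffices e1 : (fun i => if i < k + 1 then (_root_.rr (.arrow A B)).2 g i else .bot) =
              dLam k (fun i => if i < k then (_root_.rr (.arrow A B)).2 g i else .bot)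
                ((_root_.rr B).2 (g ((_root_.rr A).1 (dVar k)))) by
            rw [e1]; exact h
          funext i
          simp only [dLam]
          by_cases h1 : i = k
          · subst h1; simp [_root_.rr]
          · have : i < k + 1 ↔ i < k := by omega
            simp only [h1, this, if_false]
      obtain ⟨r, hr⟩ := key N
      refine ⟨r, fun g t hg z => ?_⟩
      have h := hr g t hg z
      rw [hN _ ((_root_.rr (.arrow A B)).2 g) (fun i hi => by rw [if_pos hi])] at h
      exact h

theorem RR.exists_subst (Γ : Ctx ν) : ∀ η : Env Γ,
    (∀ (A : Ty ν) (v : Var Γ A), ∃ t : Tm Δ (A.substA (fun _ => Ob C n)),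
      RR a₀ b₀ e A (η A v) t) →
    ∃ s : Subst (Γ.map (Ty.substA (fun _ => Ob C n))) Δ,
      ∀ (B : Ty ν) (v : Var Γ B), RR a₀ b₀ e B (η B v) (s _ (v.substA _)) := by
  induction Γ with
  | nil => intro η _; exact ⟨fun _ v => v.elim0, fun _ v => v.elim0⟩
  | cons A Γ ih =>
    intro η h
    obtain ⟨t, ht⟩ := h A .vz
    obtain ⟨s, hs⟩ := ih (fun B v => η B (.vs v)) (fun B v => h B (.vs v))
    refine ⟨Subst.cons t s, fun B v => ?_⟩
    cases v with
    | vz => exact ht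
    | vs w => exact hs _ w

end Step2

/--
**Maximality Corollary.** If `a = b` is not provable in Λ, then in Λ extended with
`a = b` as a new axiom schema one can prove every formula `c = d`.
-/
theorem maximality_lambda {ν : Type} [Nonempty ν] {Γ : Ctx ν} {A : Ty ν}
    (a b : Tm Γ A) (hne : ¬ Eqv a b) {Δ : Ctx ν} {C : Ty ν} (c d : Tm Δ C) :
    EqvExt a b c d := by
  classical
  have h0 : (rr A).2 (a.eval (env0 Γ)) Γ.length ≠ (rr A).2 (b.eval (env0 Γ)) Γ.length :=
    fun h => hne (completeness a b h)
  obtain ⟨n, e, N, hxy, hA, hL, hN⟩ := finite_congruence _ _ _ h0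
  obtain ⟨s, hs⟩ := RR.exists_subst (a₀ := a) (b₀ := b) (e := e) (Δ := Δ) (C := C) Γ (env0 Γ) (by
    intro B v
    obtain ⟨q, hq⟩ := (RR.rr (a₀ := a) (b₀ := b) (Δ := Δ) (C := C) hA hL hN B).1
    obtain ⟨t, ht⟩ := RO.const (a₀ := a) (b₀ := b) (C := C) (Δ := Δ) (e := e) (dVar v.level)
    exact ⟨_, hq _ _ ht⟩)
  obtain ⟨r, hr⟩ := (RR.rr (a₀ := a) (b₀ := b) (Δ := Δ) (C := C) hA hL hN A).2
  let z : Fin n → Tm Δ C := fun i => if i = e ((rr A).2 (a.eval (env0 Γ))) then c else d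
  have h1 := hr _ _ (RR.fund a s (env0 Γ) hs) z
  have h2 := hr _ _ (RR.fund b s (env0 Γ) hs) z
  have e1 : z (e ((rr A).2 (a.eval (env0 Γ)))) = c := if_pos rfl
  have e2 : z (e ((rr A).2 (b.eval (env0 Γ)))) = d := if_neg (Ne.symm hxy)
  rw [e1] at h1
  rw [e2] at h2
  refine .trans (.symm h1) (.trans (appsN_congr a b n ?_ (fun _ => .refl _)) h2)
  exact .congApp (.refl r) (.ax _ s)
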